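/- arXiv:2103.00233 — 4 statements merged into one kernel-verified Lean document; each statement's English description precedes it below -/
import Mathlib

section
/- For every σ > 0 and every α ∈ ℝ, 0 ≤ ψ_G(α;σ) − max{0, 1−α} ≤ σ/√(2π). Moreover the upper bound is attained at α = 1, i.e. ψ_G(1;σ) = σ/√(2π). -/
open Real Set

/-- The probability density function of the standard normal distribution. -/
noncomputable def stdGaussPDF (v : ℝ) : ℝ :=
  (1 / Real.sqrt (2 * Real.pi)) * Real.exp (-v ^ 2 / 2)

/-- The cumulative distribution function of the standard normal distribution. -/
noncomputable def stdGaussCDF (v : ℝ) : ℝ :=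
  ∫ t in Set.Iic v, stdGaussPDF t

/-- The smooth Hinge loss ψ_G(α;σ) = Φ(v)(1−α) + φ(v)σ with v = (1−α)/σ. -/
noncomputable def psiG (σ α : ℝ) : ℝ :=
  stdGaussCDF ((1 - α) / σ) * (1 - α) + stdGaussPDF ((1 - α) / σ) * σ

/-!
The smooth hinge loss is the hinge loss blurred by Gaussian noise: if `Z` is standard normal, then
`psiG σ α = 𝔼[max 0 (1 - α - σ * Z)]`. Since `Z` has mean zero, Jensen's inequality for the convex
function `max 0` gives the lower bound. Subadditivity of `max 0` shows that the blurring raises the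
loss by at most `𝔼[max 0 (-σ * Z)]`, which is `psiG σ 1`.
-/

open MeasureTheory ProbabilityTheory Filter

section PositivePart

variable {Ω : Type*} [MeasurableSpace Ω] {μ : Measure Ω} {X : Ω → ℝ}

lemma max_zero_integral_le_integral_max_zero (hX : Integrable X μ) :
    max 0 (∫ ω, X ω ∂μ) ≤ ∫ ω, max 0 (X ω) ∂μ :=
  max_le (integral_nonneg fun _ ↦ le_max_left _ _)
    (integral_mono hX ((integrable_zero _ _ _).sup hX) fun _ ↦ le_max_right _ _)

lemma integral_max_zero_add_le [IsProbabilityMeasure μ] (hX : Integrable X μ) (a : ℝ) :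
    ∫ ω, max 0 (a + X ω) ∂μ ≤ max 0 a + ∫ ω, max 0 (X ω) ∂μ := by
  have hXpos : Integrable (fun ω ↦ max 0 (X ω)) μ := (integrable_zero _ _ _).sup hX
  have haX : Integrable (fun ω ↦ max 0 (a + X ω)) μ :=
    (integrable_zero _ _ _).sup ((integrable_const a).add hX)
  calc ∫ ω, max 0 (a + X ω) ∂μ
      ≤ ∫ ω, (max 0 a + max 0 (X ω)) ∂μ :=
        integral_mono haX ((integrable_const _).add hXpos) fun ω ↦
          max_le (add_nonneg (le_max_left _ _) (le_max_left _ _))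
            (add_le_add (le_max_right _ _) (le_max_right _ _))
    _ = max 0 a + ∫ ω, max 0 (X ω) ∂μ := by
        rw [integral_add (integrable_const _) hXpos, integral_const, probReal_univ, one_smul]

end PositivePart

lemma stdGaussPDF_eq_gaussianPDFReal : stdGaussPDF = gaussianPDFReal 0 1 := by
  ext t
  simp [stdGaussPDF, gaussianPDFReal]

lemma stdGaussPDF_zero : stdGaussPDF 0 = 1 / √(2 * π) := by
  simp [stdGaussPDF]

lemma integrable_stdGaussPDF : Integrable stdGaussPDF :=
  stdGaussPDF_eq_gaussianPDFReal ▸ integrable_gaussianPDFReal 0 1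

lemma integrable_neg_mul_stdGaussPDF : Integrable fun t ↦ -t * stdGaussPDF t := by
  have h := (integrable_mul_exp_neg_mul_sq (b := 1 / 2) (by norm_num)).const_mul (-(1 / √(2 * π)))
  refine h.congr (.of_forall fun t ↦ ?_)
  simp only [stdGaussPDF]
  ring_nf

lemma hasDerivAt_stdGaussPDF (t : ℝ) : HasDerivAt stdGaussPDF (-t * stdGaussPDF t) t := by
  have hexponent : HasDerivAt (fun x : ℝ ↦ -x ^ 2 / 2) (-t) t := by
    refine ((hasDerivAt_pow 2 t).fun_neg.div_const 2).congr_deriv ?_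
    ring
  refine (hexponent.exp.const_mul (1 / √(2 * π))).congr_deriv ?_
  rw [stdGaussPDF]
  ring

lemma setIntegral_Iic_neg_mul_stdGaussPDF (v : ℝ) :
    ∫ t in Iic v, -t * stdGaussPDF t = stdGaussPDF v := by
  have htendsto : Tendsto stdGaussPDF atBot (nhds 0) :=
    tendsto_zero_of_hasDerivAt_of_integrableOn_Iic (a := v) (fun t _ ↦ hasDerivAt_stdGaussPDF t)
      integrable_neg_mul_stdGaussPDF.integrableOn integrable_stdGaussPDF.integrableOn
  rw [integral_Iic_of_hasDerivAt_of_tendsto' (fun t _ ↦ hasDerivAt_stdGaussPDF t)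
    integrable_neg_mul_stdGaussPDF.integrableOn htendsto, sub_zero]

lemma integral_max_zero_sub_gaussianReal (v : ℝ) :
    ∫ z, max 0 (v - z) ∂gaussianReal 0 1 = stdGaussCDF v * v + stdGaussPDF v := by
  have hindicator (t : ℝ) : stdGaussPDF t * max 0 (v - t) =
      (Iic v).indicator (fun t ↦ v * stdGaussPDF t + -t * stdGaussPDF t) t := by
    by_cases ht : t ≤ v
    · rw [indicator_of_mem (mem_Iic.2 ht), max_eq_right (sub_nonneg.2 ht)]
      ring
    · rw [indicator_of_notMem (mt mem_Iic.1 ht), max_eq_left (by linarith), mul_zero]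
  calc ∫ z, max 0 (v - z) ∂gaussianReal 0 1
      = ∫ t, stdGaussPDF t * max 0 (v - t) := by
        simp only [integral_gaussianReal_eq_integral_smul one_ne_zero,
          stdGaussPDF_eq_gaussianPDFReal, smul_eq_mul]
    _ = ∫ t in Iic v, (v * stdGaussPDF t + -t * stdGaussPDF t) := by
        simp only [hindicator, integral_indicator measurableSet_Iic]
    _ = v * stdGaussCDF v + stdGaussPDF v := by
        rw [integral_add (integrable_stdGaussPDF.const_mul v).integrableOn
          integrable_neg_mul_stdGaussPDF.integrableOn, integral_const_mul,
          setIntegral_Iic_neg_mul_stdGaussPDF, stdGaussCDF]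
    _ = stdGaussCDF v * v + stdGaussPDF v := by rw [mul_comm]

lemma psiG_eq_integral_gaussianReal {σ : ℝ} (hσ : 0 < σ) (α : ℝ) :
    psiG σ α = ∫ z, max 0 (1 - α + -σ * z) ∂gaussianReal 0 1 := by
  have hscale (z : ℝ) : max 0 (1 - α + -σ * z) = σ * max 0 ((1 - α) / σ - z) := by
    rw [mul_max_of_nonneg _ _ hσ.le, mul_zero, mul_sub, mul_div_cancel₀ _ hσ.ne', neg_mul,
      ← sub_eq_add_neg]
  simp only [hscale, integral_const_mul, integral_max_zero_sub_gaussianReal, psiG]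
  field_simp

lemma psiG_one (σ : ℝ) : psiG σ 1 = σ / √(2 * π) := by
  rw [psiG, sub_self, zero_div, mul_zero, zero_add, stdGaussPDF_zero, one_div_mul_eq_div]

lemma integrable_id_gaussianReal (m : ℝ) (v : NNReal) :
    Integrable (fun z ↦ z) (gaussianReal m v) :=
  (memLp_id_gaussianReal 1).integrable le_rfl

lemma max_zero_one_sub_le_psiG {σ : ℝ} (hσ : 0 < σ) (α : ℝ) : max 0 (1 - α) ≤ psiG σ α := by
  have hnoise := (integrable_id_gaussianReal 0 1).const_mul (-σ)
  have hmean : ∫ z, (1 - α + -σ * z) ∂gaussianReal 0 1 = 1 - α := by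
    rw [integral_add (integrable_const _) hnoise, integral_const, integral_const_mul,
      integral_id_gaussianReal, probReal_univ, one_smul, mul_zero, add_zero]
  calc max 0 (1 - α)
      = max 0 (∫ z, (1 - α + -σ * z) ∂gaussianReal 0 1) := by rw [hmean]
    _ ≤ ∫ z, max 0 (1 - α + -σ * z) ∂gaussianReal 0 1 :=
        max_zero_integral_le_integral_max_zero ((integrable_const _).add hnoise)
    _ = psiG σ α := (psiG_eq_integral_gaussianReal hσ α).symm

lemma psiG_le_max_zero_one_sub_add_psiG_one {σ : ℝ} (hσ : 0 < σ) (α : ℝ) :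
    psiG σ α ≤ max 0 (1 - α) + psiG σ 1 := by
  simpa only [psiG_eq_integral_gaussianReal hσ, sub_self, zero_add] using
    integral_max_zero_add_le ((integrable_id_gaussianReal 0 1).const_mul (-σ)) (1 - α)

theorem stmt_3 (σ : ℝ) (hσ : 0 < σ) :
    (∀ α : ℝ,
      0 ≤ psiG σ α - max 0 (1 - α) ∧
      psiG σ α - max 0 (1 - α) ≤ σ / Real.sqrt (2 * Real.pi)) ∧
    psiG σ 1 = σ / Real.sqrt (2 * Real.pi) := by
  refine ⟨fun α ↦ ⟨sub_nonneg.2 (max_zero_one_sub_le_psiG hσ α), ?_⟩, psiG_one σ⟩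
  rw [← psiG_one, sub_le_iff_le_add']
  exact psiG_le_max_zero_one_sub_add_psiG_one hσ α
end

section
/- The smooth Hinge loss ψ_M(α;σ) converges to the Hinge loss max{0,1−α} uniformly in α as σ → 0⁺; that is, for every ε > 0 there exists δ > 0 such that for all σ ∈ (0,δ) and all α ∈ ℝ, |ψ_M(α;σ) − max{0,1−α}| < ε. -/
/-- Φ_M(v) = (1 + v/√(1+v²))/2. -/
noncomputable def PhiM (v : ℝ) : ℝ := (1 + v / Real.sqrt (1 + v ^ 2)) / 2

/-- φ_M(v) = 1/(2√(1+v²)). -/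
noncomputable def phiM (v : ℝ) : ℝ := 1 / (2 * Real.sqrt (1 + v ^ 2))

/-- The smooth Hinge loss ψ_M(α;σ) = Φ_M(v)(1−α) + φ_M(v)σ with v = (1−α)/σ. -/
noncomputable def psiM (σ α : ℝ) : ℝ :=
  PhiM ((1 - α) / σ) * (1 - α) + phiM ((1 - α) / σ) * σ

/-!
Writing `x = 1 - α`, the loss has the closed form `ψ_M(α;σ) = (x + √(x² + σ²)) / 2`, while the Hinge
loss is `max 0 x = (x + |x|) / 2 = (x + √(x²)) / 2`. As `|x| ≤ √(x² + σ²) ≤ |x| + σ`, the two differ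
by at most `σ / 2`, uniformly in `α`.
-/

theorem abs_sqrt_sq_add_sq_sub_abs_le (x y : ℝ) : |(√(x ^ 2 + y ^ 2) - |x|)| ≤ |y| := by
  have lower : |x| ≤ √(x ^ 2 + y ^ 2) :=
    Real.abs_le_sqrt (le_add_of_nonneg_right (sq_nonneg y))
  have upper : √(x ^ 2 + y ^ 2) ≤ |x| + |y| := by
    refine Real.sqrt_le_iff.mpr ⟨by positivity, ?_⟩
    calc x ^ 2 + y ^ 2 = |x| ^ 2 + |y| ^ 2 := by rw [sq_abs, sq_abs]
      _ ≤ (|x| + |y|) ^ 2 := pow_add_pow_le (abs_nonneg x) (abs_nonneg y) two_ne_zero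
  rw [abs_of_nonneg (sub_nonneg.mpr lower)]
  exact sub_le_iff_le_add'.mpr upper

theorem PhiM_mul_self_add_phiM (v : ℝ) : PhiM v * v + phiM v = (v + √(1 + v ^ 2)) / 2 := by
  have sq_sqrt : √(1 + v ^ 2) ^ 2 = 1 + v ^ 2 := Real.sq_sqrt (by positivity)
  unfold PhiM phiM
  field_simp
  linear_combination -sq_sqrt

theorem psiM_eq_half_add_sqrt {σ : ℝ} (hσ : 0 < σ) (α : ℝ) :
    psiM σ α = ((1 - α) + √((1 - α) ^ 2 + σ ^ 2)) / 2 := by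
  set v := (1 - α) / σ
  have mul_v : σ * v = 1 - α := mul_div_cancel₀ (1 - α) hσ.ne'
  have mul_sqrt : σ * √(1 + v ^ 2) = √((1 - α) ^ 2 + σ ^ 2) := by
    rw [← mul_v, show (σ * v) ^ 2 + σ ^ 2 = σ ^ 2 * (1 + v ^ 2) by ring,
      Real.sqrt_mul (sq_nonneg σ), Real.sqrt_sq hσ.le]
  calc psiM σ α = PhiM v * (1 - α) + phiM v * σ := rfl
    _ = σ * (PhiM v * v + phiM v) := by rw [← mul_v]; ring
    _ = (σ * v + σ * √(1 + v ^ 2)) / 2 := by rw [PhiM_mul_self_add_phiM]; ring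
    _ = ((1 - α) + √((1 - α) ^ 2 + σ ^ 2)) / 2 := by rw [mul_v, mul_sqrt]

theorem abs_psiM_sub_max_zero_le {σ : ℝ} (hσ : 0 < σ) (α : ℝ) :
    |psiM σ α - max 0 (1 - α)| ≤ σ / 2 := by
  have max_eq : max 0 (1 - α) = ((1 - α) + |1 - α|) / 2 := by
    rw [sup_eq_half_smul_add_add_abs_sub' ℝ, zero_add, sub_zero, smul_eq_mul, inv_mul_eq_div]
  calc |psiM σ α - max 0 (1 - α)| = |(√((1 - α) ^ 2 + σ ^ 2) - |1 - α|)| / 2 := by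
        rw [psiM_eq_half_add_sqrt hσ, max_eq, ← sub_div, add_sub_add_left_eq_sub, abs_div, abs_two]
    _ ≤ |σ| / 2 :=
        div_le_div_of_nonneg_right (abs_sqrt_sq_add_sq_sub_abs_le (1 - α) σ) zero_le_two
    _ = σ / 2 := by rw [abs_of_pos hσ]

theorem stmt_7 :
    ∀ ε : ℝ, 0 < ε → ∃ δ : ℝ, 0 < δ ∧
      ∀ σ : ℝ, 0 < σ → σ < δ → ∀ α : ℝ, |psiM σ α - max 0 (1 - α)| < ε := by
  intro ε hε
  refine ⟨2 * ε, by positivity, fun σ hσ hσε α ↦ ?_⟩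
  calc |psiM σ α - max 0 (1 - α)| ≤ σ / 2 := abs_psiM_sub_max_zero_le hσ α
    _ < ε := by linarith
end

section
/- Let θ ∈ ℝ, σ > 0, γ > 0, and let Φ_c, φ_c : ℝ → ℝ be differentiable functions with Φ_c'(v)·v + φ_c'(v) = 0 for all v ∈ ℝ and Φ_c'(v) ≥ γσ for all v ∈ ℝ. Then ψ(α) = Φ_c(v)(θ−α) + φ_c(v)σ with v = (θ−α)/σ is γ-strongly convex: for all α, β ∈ ℝ, ψ(α) − ψ(β) ≥ ψ'(β)(α−β) + (γ/2)|α−β|². -/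
/-!
With `h v = Φ v * v + φ v`, the loss is `α ↦ σ * h ((θ - α) / σ)`. The relation
`Φ' v * v + φ' v = 0` says exactly that `h' = Φ`, so the loss has derivative `-Φ ((θ - α) / σ)` and
second derivative `Φ' ((θ - α) / σ) / σ ≥ γ`. It is therefore `γ`-strongly convex in the sense of
chords, and letting the chord shrink to an endpoint gives the tangent form of strong convexity.
-/

open Set Filter Topology

lemma uniformConvexOn_lineDeriv_add_le {E : Type*} [NormedAddCommGroup E] [NormedSpace ℝ E]
    {s : Set E} {m : ℝ → ℝ} {f : E → ℝ} {x y : E} {f' : ℝ} (hf : UniformConvexOn s m f)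
    (hx : x ∈ s) (hy : y ∈ s) (hf' : HasLineDerivWithinAt ℝ f f' s x (y - x)) :
    f' + m ‖y - x‖ ≤ f y - f x := by
  have chord_eq (t : ℝ) : x + t • (y - x) = t • y + (1 - t) • x := by module
  have chord_mem : Ioo (0 : ℝ) 1 ⊆ (fun t : ℝ ↦ x + t • (y - x)) ⁻¹' s := fun t ht ↦ by
    rw [mem_preimage, chord_eq]
    exact hf.1 hy hx ht.1.le (sub_nonneg.2 ht.2.le) (add_sub_cancel t 1)
  have slope_tendsto :
      Tendsto (fun t : ℝ ↦ t⁻¹ * (f (x + t • (y - x)) - f x)) (𝓝[>] 0) (𝓝 f') := by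
    have h := (hasDerivWithinAt_iff_tendsto_slope' left_notMem_Ioo).1
      (HasDerivWithinAt.mono hf' chord_mem)
    simpa [slope_fun_def, nhdsWithin_Ioo_eq_nhdsGT] using h
  have bound_tendsto :
      Tendsto (fun t : ℝ ↦ f y - f x - (1 - t) * m ‖y - x‖) (𝓝[>] 0)
        (𝓝 (f y - f x - m ‖y - x‖)) :=
    tendsto_nhdsWithin_of_tendsto_nhds <| Continuous.tendsto' (by fun_prop) _ _ (by simp)
  have slope_le : ∀ᶠ t : ℝ in 𝓝[>] 0,
      t⁻¹ * (f (x + t • (y - x)) - f x) ≤ f y - f x - (1 - t) * m ‖y - x‖ := by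
    filter_upwards [Ioo_mem_nhdsGT one_pos] with t ht
    have h := hf.2 hy hx ht.1.le (sub_nonneg.2 ht.2.le) (add_sub_cancel t 1)
    rw [← chord_eq, smul_eq_mul, smul_eq_mul] at h
    rw [inv_mul_le_iff₀ ht.1]
    linarith
  linarith [le_of_tendsto_of_tendsto slope_tendsto bound_tendsto slope_le]

lemma strongConvexOn_deriv_mul_add_le {s : Set ℝ} {m f' x y : ℝ} {f : ℝ → ℝ}
    (hf : StrongConvexOn s m f) (hx : x ∈ s) (hy : y ∈ s) (hf' : HasDerivWithinAt f f' s x) :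
    f' * (y - x) + m / 2 * |y - x| ^ 2 ≤ f y - f x := by
  have hline : HasLineDerivWithinAt ℝ f (f' * (y - x)) s x (y - x) := by
    simpa [mul_comm] using hf'.hasFDerivWithinAt.hasLineDerivWithinAt (y - x)
  exact uniformConvexOn_lineDeriv_add_le hf hx hy hline

lemma strongConvexOn_of_le_hasDerivWithinAt2 {D : Set ℝ} (hD : Convex ℝ D) {m : ℝ}
    {f f' f'' : ℝ → ℝ} (hf : ContinuousOn f D)
    (hf' : ∀ x ∈ interior D, HasDerivWithinAt f (f' x) (interior D) x)
    (hf'' : ∀ x ∈ interior D, HasDerivWithinAt f' (f'' x) (interior D) x)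
    (hm : ∀ x ∈ interior D, m ≤ f'' x) : StrongConvexOn D m f := by
  simp only [strongConvexOn_iff_convex, Real.norm_eq_abs, sq_abs]
  refine convexOn_of_hasDerivWithinAt2_nonneg hD (f' := fun x ↦ f' x - m * x)
    (f'' := fun x ↦ f'' x - m) (by fun_prop) (fun x hx ↦ ?_) (fun x hx ↦ ?_)
    fun x hx ↦ sub_nonneg.2 (hm x hx)
  · exact ((hf' x hx).sub (((hasDerivWithinAt_id x _).pow 2).const_mul (m / 2))).congr_deriv
      (by simp; ring)
  · exact ((hf'' x hx).sub ((hasDerivWithinAt_id x _).const_mul m)).congr_deriv (by simp)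

/-- The general smooth loss `ψ(α) = Φ(v)(θ - α) + φ(v)σ`, where `v = (θ - α) / σ`. -/
noncomputable def smoothLoss (Φ φ : ℝ → ℝ) (θ σ α : ℝ) : ℝ :=
  Φ ((θ - α) / σ) * (θ - α) + φ ((θ - α) / σ) * σ

lemma smoothLoss_eq_mul {Φ φ : ℝ → ℝ} {θ σ : ℝ} (hσ : σ ≠ 0) (α : ℝ) :
    smoothLoss Φ φ θ σ α =
      σ * (Φ ((θ - α) / σ) * ((θ - α) / σ) + φ ((θ - α) / σ)) := by
  unfold smoothLoss
  field_simp

lemma hasDerivAt_mul_id_add {𝕜 : Type*} [NontriviallyNormedField 𝕜] {Φ φ : 𝕜 → 𝕜}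
    {Φ' φ' v : 𝕜} (hΦ : HasDerivAt Φ Φ' v) (hφ : HasDerivAt φ φ' v) (hrel : Φ' * v + φ' = 0) :
    HasDerivAt (fun x ↦ Φ x * x + φ x) (Φ v) v :=
  ((hΦ.mul (hasDerivAt_id v)).add hφ).congr_deriv (by simp only [id]; linear_combination hrel)

lemma hasDerivAt_const_sub_div {𝕜 : Type*} [NontriviallyNormedField 𝕜] (θ σ α : 𝕜) :
    HasDerivAt (fun a ↦ (θ - a) / σ) (-1 / σ) α :=
  ((hasDerivAt_id α).const_sub θ).div_const σ

lemma hasDerivAt_smoothLoss {Φ φ : ℝ → ℝ} {θ σ α Φ' φ' : ℝ} (hσ : σ ≠ 0)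
    (hΦ : HasDerivAt Φ Φ' ((θ - α) / σ)) (hφ : HasDerivAt φ φ' ((θ - α) / σ))
    (hrel : Φ' * ((θ - α) / σ) + φ' = 0) :
    HasDerivAt (smoothLoss Φ φ θ σ) (-Φ ((θ - α) / σ)) α := by
  rw [funext (smoothLoss_eq_mul hσ)]
  refine (((hasDerivAt_mul_id_add hΦ hφ hrel).comp α
    (hasDerivAt_const_sub_div θ σ α)).const_mul σ).congr_deriv ?_
  field_simp

lemma strongConvexOn_smoothLoss {Φ φ Φ' φ' : ℝ → ℝ} {θ σ γ : ℝ} (hσ : 0 < σ)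
    (hΦ : ∀ v, HasDerivAt Φ (Φ' v) v) (hφ : ∀ v, HasDerivAt φ (φ' v) v)
    (hrel : ∀ v, Φ' v * v + φ' v = 0) (hlow : ∀ v, γ * σ ≤ Φ' v) :
    StrongConvexOn univ γ (smoothLoss Φ φ θ σ) := by
  have hderiv (α : ℝ) : HasDerivAt (smoothLoss Φ φ θ σ) (-Φ ((θ - α) / σ)) α :=
    hasDerivAt_smoothLoss hσ.ne' (hΦ _) (hφ _) (hrel _)
  have hderiv2 (α : ℝ) :
      HasDerivAt (fun a ↦ -Φ ((θ - a) / σ)) (Φ' ((θ - α) / σ) / σ) α :=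
    ((hΦ _).comp α (hasDerivAt_const_sub_div θ σ α)).neg.congr_deriv (by ring)
  exact strongConvexOn_of_le_hasDerivWithinAt2 convex_univ
    (fun α _ ↦ (hderiv α).continuousAt.continuousWithinAt)
    (fun α _ ↦ (hderiv α).hasDerivWithinAt) (fun α _ ↦ (hderiv2 α).hasDerivWithinAt)
    fun _ _ ↦ (le_div_iff₀ hσ).2 (hlow _)

theorem stmt_10 (θ σ γ : ℝ) (hσ : 0 < σ) (hγ : 0 < γ) (Φc φc : ℝ → ℝ)
    (hΦ : Differentiable ℝ Φc) (hφ : Differentiable ℝ φc)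
    (hrel : ∀ v : ℝ, deriv Φc v * v + deriv φc v = 0)
    (hlow : ∀ v : ℝ, γ * σ ≤ deriv Φc v)
    (ψ : ℝ → ℝ)
    (hψ : ∀ α : ℝ, ψ α = Φc ((θ - α) / σ) * (θ - α) + φc ((θ - α) / σ) * σ) :
    ∀ α β : ℝ, ψ α - ψ β ≥ deriv ψ β * (α - β) + (γ / 2) * |α - β| ^ 2 := by
  intro α β
  obtain rfl : ψ = smoothLoss Φc φc θ σ := funext hψ
  have hΦ' (v : ℝ) : HasDerivAt Φc (deriv Φc v) v := (hΦ v).hasDerivAt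
  have hφ' (v : ℝ) : HasDerivAt φc (deriv φc v) v := (hφ v).hasDerivAt
  have hconvex : StrongConvexOn univ γ (smoothLoss Φc φc θ σ) :=
    strongConvexOn_smoothLoss hσ hΦ' hφ' hrel hlow
  have hderiv : HasDerivAt (smoothLoss Φc φc θ σ) (-Φc ((θ - β) / σ)) β :=
    hasDerivAt_smoothLoss hσ.ne' (hΦ' _) (hφ' _) (hrel _)
  exact strongConvexOn_deriv_mul_add_le hconvex (mem_univ β) (mem_univ α)
    hderiv.differentiableAt.hasDerivAt.hasDerivWithinAt
end

section
/- Let θ ∈ ℝ, σ > 0, and let Φ_c, φ_c : ℝ → ℝ be differentiable functions with Φ_c'(v)·v + φ_c'(v) = 0 and Φ_c'(v) ≥ 0 for all v ∈ ℝ, and additionally Φ_c(v) ≥ 0 for all v. If v : ℝ → ℝ is convex and differentiable, then the composite function ψ_v(α) = Φ_c(v(α))·v(α) + φ_c(v(α)) is convex on ℝ. -/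
/-!
The relation `Φ'(u) u + φ'(u) = 0` says exactly that `F(u) = Φ(u) u + φ(u)` is an antiderivative
of `Φ`. Since `Φ` is nonnegative and increasing, `F` is increasing and convex, and an increasing
convex function of a convex function is convex.
-/

section Composition

variable {𝕜 E β γ : Type*} [Semiring 𝕜] [PartialOrder 𝕜] [AddCommMonoid E] [SMul 𝕜 E]
  [AddCommMonoid β] [PartialOrder β] [SMul 𝕜 β] [AddCommMonoid γ] [PartialOrder γ] [SMul 𝕜 γ]

/- Mathlib's `ConvexOn.comp` asks for convexity of `g` on `f '' s`, hence for `f '' s` to be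
convex, which may fail when `f` is discontinuous. -/
theorem convexOn_comp_of_monotoneOn_of_mapsTo {s : Set E} {t : Set β} {f : E → β} {g : β → γ}
    (hg : ConvexOn 𝕜 t g) (hg_mono : MonotoneOn g t) (hf : ConvexOn 𝕜 s f)
    (hst : Set.MapsTo f s t) : ConvexOn 𝕜 s (g ∘ f) := by
  refine ⟨hf.1, fun x hx y hy a b ha hb hab ↦ ?_⟩
  calc g (f (a • x + b • y))
      ≤ g (a • f x + b • f y) :=
        hg_mono (hst (hf.1 hx hy ha hb hab)) (hg.1 (hst hx) (hst hy) ha hb hab)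
          (hf.2 hx hy ha hb hab)
    _ ≤ a • g (f x) + b • g (f y) := hg.2 (hst hx) (hst hy) ha hb hab

end Composition

theorem convexOn_univ_of_hasDerivAt_of_monotone {f f' : ℝ → ℝ}
    (hf : ∀ x, HasDerivAt f (f' x) x) (hf' : Monotone f') : ConvexOn ℝ Set.univ f := by
  have hderiv : deriv f = f' := deriv_eq hf
  exact Monotone.convexOn_univ_of_deriv (fun x ↦ (hf x).differentiableAt) (hderiv ▸ hf')

theorem hasDerivAt_mul_self_add_of_mul_self_add_eq_zero {𝕜 : Type*} [NontriviallyNormedField 𝕜]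
    {Φ φ : 𝕜 → 𝕜} {Φ' φ' u : 𝕜} (hΦ : HasDerivAt Φ Φ' u) (hφ : HasDerivAt φ φ' u)
    (hrel : Φ' * u + φ' = 0) : HasDerivAt (fun x ↦ Φ x * x + φ x) (Φ u) u := by
  refine ((hΦ.mul (hasDerivAt_id' u)).add hφ).congr_deriv ?_
  linear_combination hrel

theorem stmt_14_general {E : Type*} [AddCommMonoid E] [SMul ℝ E] {Φ φ : ℝ → ℝ}
    (hΦ : Differentiable ℝ Φ) (hφ : Differentiable ℝ φ)
    (hrel : ∀ u, deriv Φ u * u + deriv φ u = 0) (hΦ_deriv : ∀ u, 0 ≤ deriv Φ u)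
    (hΦ_nonneg : ∀ u, 0 ≤ Φ u) {s : Set E} {v : E → ℝ} (hv : ConvexOn ℝ s v) :
    ConvexOn ℝ s (fun α ↦ Φ (v α) * v α + φ (v α)) := by
  have hF : ∀ u, HasDerivAt (fun x ↦ Φ x * x + φ x) (Φ u) u := fun u ↦
    hasDerivAt_mul_self_add_of_mul_self_add_eq_zero (hΦ u).hasDerivAt (hφ u).hasDerivAt (hrel u)
  have hF_mono : Monotone (fun x ↦ Φ x * x + φ x) := monotone_of_hasDerivAt_nonneg hF hΦ_nonneg
  have hF_convex : ConvexOn ℝ Set.univ (fun x ↦ Φ x * x + φ x) :=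
    convexOn_univ_of_hasDerivAt_of_monotone hF (monotone_of_deriv_nonneg hΦ hΦ_deriv)
  exact convexOn_comp_of_monotoneOn_of_mapsTo hF_convex (hF_mono.monotoneOn _) hv
    (Set.mapsTo_univ v s)

theorem stmt_14 (Φc φc : ℝ → ℝ)
    (hΦ : Differentiable ℝ Φc) (hφ : Differentiable ℝ φc)
    (hrel : ∀ u : ℝ, deriv Φc u * u + deriv φc u = 0)
    (hderpos : ∀ u : ℝ, 0 ≤ deriv Φc u)
    (hΦpos : ∀ u : ℝ, 0 ≤ Φc u)
    (v : ℝ → ℝ) (hvconv : ConvexOn ℝ Set.univ v) (hvdiff : Differentiable ℝ v) :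
    ConvexOn ℝ Set.univ (fun α : ℝ => Φc (v α) * v α + φc (v α)) :=
  stmt_14_general hΦ hφ hrel hderpos hΦpos hvconv
end
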